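/- arXiv:1201.6124 — 2 statements merged into one kernel-verified Lean document; each statement's English description precedes it below -/
import Mathlib

section
/- Let Δ be a compact convex subset of ℝ^d and let G : ℝ^d → ℝ be concave on Δ, upper semicontinuous on Δ, and Lebesgue integrable on Δ. Set Θ := closure of {x ∈ Δ : G(x) > 0}. If ∫_Δ G(x) dx = ∫_Θ G(x) dx and this common value is positive, then G(x) ≥ 0 for every x in the topological interior of Δ. -/
open MeasureTheory

/-!
Since `∫_Δ G = ∫_Θ G`, the integral of `G` over `Δ \ Θ` vanishes, and `G ≤ 0` there because
`Θ` contains every point of `Δ` at which `G` is positive; hence `G = 0` almost everywhere on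
`Δ \ Θ`. If `G x < 0` at an interior point `x`, upper semicontinuity makes `G` negative on a
whole neighbourhood of `x` in `Δ`. The interior of this neighbourhood misses `Θ`, so `G` is
negative on a subset of `Δ \ Θ` of positive measure, a contradiction.
-/

/-- Let `Δ ⊆ ℝ^d` be compact and convex, `G` concave, upper semicontinuous and
Lebesgue-integrable on `Δ`, and `Θ` the closure of `{x ∈ Δ | G(x) > 0}`. If
`∫_Δ G = ∫_Θ G > 0`, then `G ≥ 0` on the interior of `Δ`. -/
theorem nonneg_on_interior_of_integral_eq (d : ℕ) (Δ : Set (Fin d → ℝ))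
    (hcomp : IsCompact Δ) (hconv : Convex ℝ Δ)
    (G : (Fin d → ℝ) → ℝ)
    (hconc : ConcaveOn ℝ Δ G)
    (husc : UpperSemicontinuousOn G Δ)
    (hint : IntegrableOn G Δ volume)
    (Θ : Set (Fin d → ℝ)) (hΘ : Θ = closure {x ∈ Δ | 0 < G x})
    (heq : ∫ x in Δ, G x = ∫ x in Θ, G x)
    (hpos : 0 < ∫ x in Δ, G x) :
    ∀ x ∈ interior Δ, 0 ≤ G x := by
  intro x hx
  by_contra! hneg
  have hΘΔ : Θ ⊆ Δ := hΘ ▸ closure_minimal (fun y hy => hy.1) hcomp.isClosed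
  have hΘmeas : MeasurableSet Θ := hΘ ▸ isClosed_closure.measurableSet
  have hdiff : MeasurableSet (Δ \ Θ) := hcomp.isClosed.measurableSet.diff hΘmeas
  have hzero : ∫ y in Δ \ Θ, -G y = 0 := by
    rw [integral_neg, setIntegral_sdiff hΘmeas hint hΘΔ, heq, sub_self, neg_zero]
  have hnonneg : 0 ≤ᵐ[volume.restrict (Δ \ Θ)] fun y => -G y := by
    refine (ae_restrict_iff' hdiff).2 (Filter.Eventually.of_forall fun y hy => ?_)
    have hy' : ¬ 0 < G y := fun h => hy.2 (hΘ ▸ subset_closure ⟨hy.1, h⟩)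
    simpa using hy'
  have hae : ∀ᵐ y, y ∈ Δ \ Θ → -G y = 0 :=
    (ae_restrict_iff' hdiff).1
      ((setIntegral_eq_zero_iff_of_nonneg_ae hnonneg (hint.mono_set Set.sdiff_subset).neg).1 hzero)
  have hΔx : Δ ∈ nhds x := mem_interior_iff_mem_nhds.1 hx
  have hev : ∀ᶠ y in nhds x, G y < 0 := by
    have h := husc x (interior_subset hx) 0 hneg
    rwa [nhdsWithin_eq_nhds.2 hΔx] at h
  have hbad : {y | ¬ (y ∈ Δ \ Θ → -G y = 0)} ∈ nhds x := by
    filter_upwards [hΔx, hev, hev.eventually_nhds] with y hyΔ hy hynear hyimp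
    have hyΘ : y ∉ Θ := by
      intro h
      rw [hΘ] at h
      obtain ⟨z, hz, hzpos⟩ := mem_closure_iff_nhds.1 h _ hynear
      exact lt_asymm hzpos.2 hz
    linarith [hyimp ⟨hyΔ, hyΘ⟩]
  exact (Measure.measure_pos_of_mem_nhds volume hbad).ne' (ae_iff.1 hae)
end

section
/- Let l be a positive integer and let M be a symmetric real l×l matrix whose off-diagonal entries are nonnegative (M_{ij} ≥ 0 for all i ≠ j). Suppose that xᵀMx < 0 for every nonzero vector x ∈ ℝ^l all of whose entries are nonnegative. Then xᵀMx < 0 for every nonzero x ∈ ℝ^l; that is, M is negative definite. -/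
/-- Let `M` be a symmetric real `l × l` matrix (`l > 0`) with nonnegative off-diagonal
entries. If `xᵀMx < 0` for every nonzero nonnegative vector `x`, then `xᵀMx < 0` for
every nonzero `x ∈ ℝ^l`; that is, `M` is negative definite. -/
theorem negDef_of_negOn_nonneg (l : ℕ) (hl : 0 < l)
    (M : Matrix (Fin l) (Fin l) ℝ)
    (hsymm : M.IsSymm)
    (hoff : ∀ i j, i ≠ j → 0 ≤ M i j)
    (hneg : ∀ x : Fin l → ℝ, x ≠ 0 → (∀ i, 0 ≤ x i) →
      ∑ i, ∑ j, M i j * x i * x j < 0) :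
    ∀ x : Fin l → ℝ, x ≠ 0 → ∑ i, ∑ j, M i j * x i * x j < 0 := by
  intro x hx
  -- Passing from `x` to `|x|` fixes the diagonal terms and can only increase the others.
  have hle : ∑ i, ∑ j, M i j * x i * x j ≤ ∑ i, ∑ j, M i j * |x i| * |x j| := by
    refine Finset.sum_le_sum fun i _ => Finset.sum_le_sum fun j _ => ?_
    rw [mul_assoc, mul_assoc, ← abs_mul]
    by_cases h : i = j
    · subst h
      rw [abs_mul_self]
    · exact mul_le_mul_of_nonneg_left (le_abs_self _) (hoff i j h)
  refine hle.trans_lt (hneg (fun i => |x i|) (fun h => hx ?_) fun i => abs_nonneg _)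
  funext i
  exact abs_eq_zero.mp (congrFun h i)
end
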